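/- Let 1 ≤ k ≤ L be integers, λ > 0, and let u be a solution of the mean-field ODE system taking values in Ū. Then for all j ≥ 0 and all t ≥ 0, u_j(t) ≤ ∑_{i=0}^{j} u_i(0)·(λkt)^{j−i}/(j−i)!. -/

import Mathlib

/-!
The polynomial `f` is a mean: `f(x) = 𝔼 (X - (L - k))⁺` for `X` binomial with parameters `L` and
`x`. Indeed `𝔼 φ(X) = ∑ j, C(L, j) xʲ (Δʲ φ)(0)` for every `φ : ℕ → ℝ`, and the second difference
of `m ↦ (m - (a + 1))⁺` is the unit mass at `a`, which yields the coefficients of `f`. On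
`0 ≤ m ≤ L` one has `0 ≤ (m - (L - k))⁺ ≤ (k / L) m`, so `0 ≤ f(x) ≤ k x` on `[0, 1]`. The
mean-field system therefore implies `u_{j+1}' ≤ λ k u_j`, and the right-hand side of the estimate
solves `v_{j+1}' = λ k v_j` with the same initial data; comparing `u_j` with `v_j` by induction on
`j` gives the claim.
-/

open Finset Set

/-- The polynomial `f ≡ f^{(L,k)}` from the paper. -/
noncomputable def fLk (L k : ℕ) (x : ℝ) : ℝ :=
  ∑ i ∈ Finset.Icc 1 k,
    (L.choose (L - k + i) : ℝ) * ((L - k + i - 2).choose (i - 1) : ℝ) *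
      (-1 : ℝ) ^ (i - 1) * x ^ (L - k + i)

/-- Membership in `Ū`: real sequences with `1 = u_0 ≥ u_1 ≥ … ≥ 0`. -/
def InUbar (u : ℕ → ℝ) : Prop :=
  u 0 = 1 ∧ (∀ j, u (j + 1) ≤ u j) ∧ (∀ j, 0 ≤ u j)

/-- A `Ū`-valued solution of the mean-field ODE system with initial condition `g`. -/
def IsMFSol (L k : ℕ) (lam : ℝ) (g : ℕ → ℝ) (u : ℝ → ℕ → ℝ) : Prop :=
  (∀ j, u 0 j = g j) ∧
  (∀ t ∈ Set.Ici (0 : ℝ), InUbar (u t)) ∧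
  (∀ j, 1 ≤ j → ∀ t ∈ Set.Ici (0 : ℝ),
    HasDerivWithinAt (fun τ => u τ j)
      (lam * (fLk L k (u t (j - 1)) - fLk L k (u t j)) - k * (u t j - u t (j + 1)))
      (Set.Ici (0 : ℝ)) t)

open scoped fwdDiff

section BinomialMean

variable {R : Type*} [CommRing R]

theorem eval_bernsteinPolynomial (n m : ℕ) (x : R) :
    (bernsteinPolynomial R n m).eval x = n.choose m * x ^ m * (1 - x) ^ (n - m) := by
  simp [bernsteinPolynomial]

/-- The mean of `φ` under the binomial distribution with parameters `n` and `x`, as a polynomial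
expression that makes sense for `x` in any commutative ring. -/
noncomputable def binomialMean (n : ℕ) (φ : ℕ → R) (x : R) : R :=
  ∑ m ∈ Finset.range (n + 1), (bernsteinPolynomial R n m).eval x * φ m

theorem binomialMean_succ (n : ℕ) (φ : ℕ → R) (x : R) :
    binomialMean (n + 1) φ x = binomialMean n φ x + x * binomialMean n (Δ_[1] φ) x := by
  have pascal := Finset.sum_choose_succ_mul (fun m l => x ^ m * (1 - x) ^ l * φ m) n
  simp only [← mul_assoc] at pascal
  simp only [binomialMean, eval_bernsteinPolynomial, pascal, Finset.mul_sum,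
    ← Finset.sum_add_distrib]
  refine Finset.sum_congr rfl fun m hm => ?_
  rw [Nat.sub_add_comm (Finset.mem_range_succ_iff.1 hm), fwdDiff]
  ring

theorem binomialMean_eq_sum_fwdDiff_iter (n : ℕ) (φ : ℕ → R) (x : R) :
    binomialMean n φ x = ∑ j ∈ Finset.range (n + 1), n.choose j * x ^ j * (Δ_[1])^[j] φ 0 := by
  induction n generalizing φ with
  | zero => simp [binomialMean, eval_bernsteinPolynomial]
  | succ n ih =>
    have pascal := Finset.sum_choose_succ_mul (fun j _ => x ^ j * (Δ_[1])^[j] φ 0) n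
    simp only [← mul_assoc] at pascal
    rw [binomialMean_succ, ih, ih, pascal, Finset.mul_sum]
    congr 1
    refine Finset.sum_congr rfl fun j _ => ?_
    rw [Function.iterate_succ_apply]
    ring

theorem binomialMean_const_mul_natCast (n : ℕ) (c x : R) :
    binomialMean n (fun m => c * m) x = c * (n * x) := by
  have mean := congrArg (Polynomial.eval x) (bernsteinPolynomial.sum_smul R n)
  simp only [nsmul_eq_mul, Polynomial.eval_finsetSum, Polynomial.eval_mul,
    Polynomial.eval_natCast, Polynomial.eval_X] at mean
  rw [binomialMean, ← mean, Finset.mul_sum]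
  exact Finset.sum_congr rfl fun m _ => by ring

end BinomialMean

section BinomialMeanOrder

variable {R : Type*} [CommRing R] [PartialOrder R] [IsOrderedRing R] {x : R}

theorem eval_bernsteinPolynomial_nonneg (hx : x ∈ Set.Icc 0 1) (n m : ℕ) :
    0 ≤ (bernsteinPolynomial R n m).eval x := by
  have hx₀ := hx.1
  have hx₁ := sub_nonneg.2 hx.2
  rw [eval_bernsteinPolynomial]
  positivity

theorem binomialMean_nonneg (hx : x ∈ Set.Icc 0 1) (n : ℕ) {φ : ℕ → R} (hφ : ∀ m ≤ n, 0 ≤ φ m) :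
    0 ≤ binomialMean n φ x :=
  Finset.sum_nonneg fun m hm => mul_nonneg (eval_bernsteinPolynomial_nonneg hx n m)
    (hφ m (Finset.mem_range_succ_iff.1 hm))

theorem binomialMean_le_binomialMean (hx : x ∈ Set.Icc 0 1) {n : ℕ} {φ ψ : ℕ → R}
    (h : ∀ m ≤ n, φ m ≤ ψ m) : binomialMean n φ x ≤ binomialMean n ψ x :=
  Finset.sum_le_sum fun m hm => mul_le_mul_of_nonneg_left
    (h m (Finset.mem_range_succ_iff.1 hm)) (eval_bernsteinPolynomial_nonneg hx n m)

end BinomialMeanOrder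

section TruncatedSubtraction

variable {R : Type*} [Ring R]

theorem fwdDiff_iter_single_zero (a j : ℕ) :
    (Δ_[1])^[j] (Pi.single a (1 : R)) 0 = (-1) ^ (j - a) * j.choose a := by
  rw [fwdDiff_iter_eq_sum_shift, Finset.sum_eq_single a]
  · simp
  · intro m _ hm
    simp [hm]
  · intro ha
    rw [Nat.choose_eq_zero_of_lt (by simpa using ha)]
    simp

theorem fwdDiff_fwdDiff_natCast_tsub_succ (a : ℕ) :
    Δ_[1] (Δ_[1] fun m => ((m - (a + 1) : ℕ) : R)) = Pi.single a 1 := by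
  ext m
  simp only [fwdDiff, Pi.single_apply]
  rcases lt_trichotomy m a with h | rfl | h
  · simp [h.ne, show m + 1 + 1 - (a + 1) = 0 by omega, show m + 1 - (a + 1) = 0 by omega,
      show m - (a + 1) = 0 by omega]
  · simp
  · obtain ⟨d, rfl⟩ := Nat.exists_eq_add_of_lt h
    simp [show a + d + 1 + 1 + 1 - (a + 1) = d + 1 + 1 by omega,
      show a + d + 1 + 1 - (a + 1) = d + 1 by omega, show a + d + 1 - (a + 1) = d by omega,
      show a + d + 1 ≠ a by omega]

theorem fwdDiff_iter_natCast_tsub_zero_of_le {n j : ℕ} (h : j ≤ n) :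
    (Δ_[1])^[j] (fun m => ((m - n : ℕ) : R)) 0 = 0 := by
  rw [fwdDiff_iter_eq_sum_shift]
  refine Finset.sum_eq_zero fun m hm => ?_
  simp [Nat.sub_eq_zero_of_le ((Finset.mem_range_succ_iff.1 hm).trans h)]

-- For `n = 0` the truncated `n + i - 1` still gives the right value: `1` if `i = 0`, else `0`.
theorem fwdDiff_iter_add_succ_natCast_tsub_zero (n i : ℕ) :
    (Δ_[1])^[n + (i + 1)] (fun m => ((m - n : ℕ) : R)) 0 = (-1) ^ i * (n + i - 1).choose i := by
  cases n with
  | zero =>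
    have hΔ : Δ_[1] (fun m : ℕ => ((m - 0 : ℕ) : R)) = fun _ => 1 := by
      ext m
      simp [fwdDiff]
    rw [zero_add, Function.iterate_succ_apply, hΔ]
    cases i with
    | zero => simp
    | succ i =>
      rw [Function.iterate_succ_apply, fwdDiff_const]
      simp [fwdDiff_iter_eq_sum_shift]
  | succ a =>
    rw [show a + 1 + (i + 1) = a + i + 1 + 1 by omega, Function.iterate_succ_apply,
      Function.iterate_succ_apply, fwdDiff_fwdDiff_natCast_tsub_succ, fwdDiff_iter_single_zero,
      Nat.add_sub_cancel_left, show a + 1 + i - 1 = a + i by omega, Nat.choose_symm_add]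

end TruncatedSubtraction

theorem mul_tsub_tsub_le_mul {L k m : ℕ} (hkL : k ≤ L) (hm : m ≤ L) :
    L * (m - (L - k)) ≤ k * m := by
  rcases le_total m (L - k) with h | h
  · simp [Nat.sub_eq_zero_of_le h]
  · have gap : (0 : ℤ) ≤ (L - k) * (L - m) :=
      mul_nonneg (sub_nonneg.2 (mod_cast hkL)) (sub_nonneg.2 (mod_cast hm))
    zify [hkL, h]
    linarith

theorem fLk_eq_binomialMean {L k : ℕ} (hkL : k ≤ L) (x : ℝ) :
    fLk L k x = binomialMean L (fun m => ((m - (L - k) : ℕ) : ℝ)) x := by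
  obtain ⟨n, rfl⟩ := Nat.exists_eq_add_of_le' hkL
  rw [fLk, ← Finset.Ico_add_one_right_eq_Icc, Finset.sum_Ico_eq_sum_range,
    binomialMean_eq_sum_fwdDiff_iter, Nat.add_sub_cancel, Nat.add_sub_cancel, add_right_comm n k 1,
    Finset.sum_range_add, Finset.sum_eq_zero (s := Finset.range (n + 1)), zero_add]
  · refine Finset.sum_congr rfl fun i _ => ?_
    rw [Nat.add_right_comm n 1 i, add_assoc n i 1, fwdDiff_iter_add_succ_natCast_tsub_zero,
      add_comm 1 i, Nat.add_sub_cancel, show n + (i + 1) - 2 = n + i - 1 by omega]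
    ring
  · intro j hj
    rw [fwdDiff_iter_natCast_tsub_zero_of_le (Finset.mem_range_succ_iff.1 hj), mul_zero]

theorem fLk_nonneg {L k : ℕ} (hkL : k ≤ L) {x : ℝ} (hx : x ∈ Set.Icc 0 1) : 0 ≤ fLk L k x := by
  rw [fLk_eq_binomialMean hkL]
  exact binomialMean_nonneg hx L fun m _ => Nat.cast_nonneg _

theorem fLk_le_mul {L k : ℕ} (hkL : k ≤ L) {x : ℝ} (hx : x ∈ Set.Icc 0 1) :
    fLk L k x ≤ k * x := by
  have chord (m : ℕ) (hm : m ≤ L) : ((m - (L - k) : ℕ) : ℝ) ≤ k / L * m := by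
    rcases L.eq_zero_or_pos with rfl | hL
    · simp [Nat.le_zero.1 hm]
    · rw [div_mul_eq_mul_div, le_div_iff₀' (by positivity)]
      exact_mod_cast mul_tsub_tsub_le_mul hkL hm
  have cancel : (k / L * L : ℝ) = k :=
    div_mul_cancel_of_imp fun hL =>
      Nat.cast_eq_zero.2 (Nat.le_zero.1 (hkL.trans_eq (Nat.cast_eq_zero.1 hL)))
  calc fLk L k x = binomialMean L (fun m => ((m - (L - k) : ℕ) : ℝ)) x :=
        fLk_eq_binomialMean hkL x
    _ ≤ binomialMean L (fun m => (k / L : ℝ) * m) x := binomialMean_le_binomialMean hx chord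
    _ = k * x := by rw [binomialMean_const_mul_natCast, ← mul_assoc, cancel]

theorem InUbar.mem_Icc {v : ℕ → ℝ} (hv : InUbar v) (j : ℕ) : v j ∈ Set.Icc 0 1 :=
  ⟨hv.2.2 j, hv.1 ▸ antitone_nat_of_succ_le hv.2.1 j.zero_le⟩

theorem hasDerivAt_mul_pow_div_factorial {𝕜 : Type*} [NontriviallyNormedField 𝕜]
    [CharZero 𝕜] (c : 𝕜) (n : ℕ) (t : 𝕜) :
    HasDerivAt (fun s => (c * s) ^ (n + 1) / (n + 1).factorial)
      (c * ((c * t) ^ n / n.factorial)) t := by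
  refine ((((hasDerivAt_id t).const_mul c).pow (n + 1)).div_const _).congr_deriv ?_
  rw [Nat.factorial_succ]
  push_cast
  simp only [id]
  field_simp

/-- The solution, in characteristic zero, of the linear chain `v₀' = 0`, `v_{j+1}' = c * v_j` with
initial values `a`. A factorial that vanishes in `𝕜` makes its term the junk value `0`. -/
noncomputable def linearChain {𝕜 : Type*} [Field 𝕜] (c : 𝕜) (a : ℕ → 𝕜) (j : ℕ) (t : 𝕜) : 𝕜 :=
  ∑ i ∈ Finset.range (j + 1), a i * (c * t) ^ (j - i) / (j - i).factorial

namespace linearChain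

section Field

variable {𝕜 : Type*} [Field 𝕜]

theorem zero_left (c : 𝕜) (a : ℕ → 𝕜) (t : 𝕜) : linearChain c a 0 t = a 0 := by
  simp [linearChain]

theorem zero_right (c : 𝕜) (a : ℕ → 𝕜) (j : ℕ) : linearChain c a j 0 = a j := by
  rw [linearChain, Finset.sum_range_succ, Finset.sum_eq_zero, zero_add]
  · simp
  · intro i hi
    simp [Nat.sub_ne_zero_of_lt (Finset.mem_range.1 hi)]

end Field

theorem hasDerivAt_succ {𝕜 : Type*} [NontriviallyNormedField 𝕜] [CharZero 𝕜] (c : 𝕜) (a : ℕ → 𝕜)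
    (j : ℕ) (t : 𝕜) :
    HasDerivAt (linearChain c a (j + 1)) (c * linearChain c a j t) t := by
  have eq_add_const : linearChain c a (j + 1) = fun s => (∑ i ∈ Finset.range (j + 1),
      a i * ((c * s) ^ (j - i + 1) / (j - i + 1).factorial)) + a (j + 1) := by
    ext s
    rw [linearChain, Finset.sum_range_succ]
    congr 1
    · refine Finset.sum_congr rfl fun i hi => ?_
      rw [Nat.sub_add_comm (Finset.mem_range_succ_iff.1 hi), mul_div_assoc]
    · simp
  rw [eq_add_const, linearChain, Finset.mul_sum]
  refine (HasDerivAt.fun_sum fun i _ => ?_).add_const _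
  refine ((hasDerivAt_mul_pow_div_factorial c (j - i) t).const_mul (a i)).congr_deriv ?_
  ring

end linearChain

theorem le_linearChain_of_deriv_le {c : ℝ} (hc : 0 ≤ c) {v v' : ℕ → ℝ → ℝ}
    (hv₀ : ∀ t, 0 ≤ t → v 0 t ≤ v 0 0)
    (hderiv : ∀ j t, 0 ≤ t → HasDerivWithinAt (v (j + 1)) (v' j t) (Set.Ici 0) t)
    (hle : ∀ j t, 0 ≤ t → v' j t ≤ c * v j t) (j : ℕ) {t : ℝ} (ht : 0 ≤ t) :
    v j t ≤ linearChain c (fun i => v i 0) j t := by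
  induction j generalizing t with
  | zero => exact (hv₀ t ht).trans_eq (linearChain.zero_left c (fun i => v i 0) t).symm
  | succ j ih =>
    have chain_deriv := linearChain.hasDerivAt_succ c (fun i => v i 0) j
    refine image_le_of_deriv_right_le_deriv_boundary
      (fun s hs => (hderiv j s hs.1).continuousWithinAt.mono Set.Icc_subset_Ici_self)
      (fun s hs => (hderiv j s hs.1).mono (Set.Ici_subset_Ici.2 hs.1))
      (linearChain.zero_right c (fun i => v i 0) (j + 1)).ge
      (fun s _ => (chain_deriv s).continuousAt.continuousWithinAt)
      (fun s _ => (chain_deriv s).hasDerivWithinAt)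
      (fun s hs => ?_) (Set.right_mem_Icc.2 ht)
    exact (hle j s hs.1).trans (mul_le_mul_of_nonneg_left (ih hs.1) hc)

theorem InUbar.meanField_drift_le {L k : ℕ} (hkL : k ≤ L) {lam : ℝ} (hlam : 0 ≤ lam) {v : ℕ → ℝ}
    (hv : InUbar v) (j : ℕ) :
    lam * (fLk L k (v j) - fLk L k (v (j + 1))) - k * (v (j + 1) - v (j + 2))
      ≤ lam * k * v j := by
  have arrivals : fLk L k (v j) - fLk L k (v (j + 1)) ≤ k * v j :=
    (sub_le_self _ (fLk_nonneg hkL (hv.mem_Icc (j + 1)))).trans (fLk_le_mul hkL (hv.mem_Icc j))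
  have departures : 0 ≤ k * (v (j + 1) - v (j + 2)) :=
    mul_nonneg k.cast_nonneg (sub_nonneg.2 (hv.2.1 (j + 1)))
  calc _ ≤ lam * (fLk L k (v j) - fLk L k (v (j + 1))) := sub_le_self _ departures
    _ ≤ lam * (k * v j) := mul_le_mul_of_nonneg_left arrivals hlam
    _ = lam * k * v j := (mul_assoc _ _ _).symm

/-- Lemma 5.4: for any `Ū`-valued solution `u` of the mean-field ODE system,
`u_j(t) ≤ ∑_{i=0}^{j} u_i(0)·(λkt)^{j−i}/(j−i)!` for all `j ≥ 0` and `t ≥ 0`. -/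
theorem mfSol_taylor_estimate (L k : ℕ) (hk : 1 ≤ k) (hkL : k ≤ L)
    (lam : ℝ) (hlam : 0 < lam) (g : ℕ → ℝ) (u : ℝ → ℕ → ℝ)
    (hu : IsMFSol L k lam g u) :
    ∀ j : ℕ, ∀ t ∈ Set.Ici (0 : ℝ),
      u t j ≤ ∑ i ∈ Finset.range (j + 1),
        u 0 i * (lam * k * t) ^ (j - i) / (Nat.factorial (j - i) : ℝ) := by
  obtain ⟨-, hU, hderiv⟩ := hu
  intro j t ht
  exact le_linearChain_of_deriv_le (v := fun j t => u t j) (by positivity)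
    (fun s hs => ((hU s hs).1.trans (hU 0 Set.self_mem_Ici).1.symm).le)
    (fun j => hderiv (j + 1) j.succ_pos)
    (fun j s hs => (hU s hs).meanField_drift_le hkL hlam.le j) j ht
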